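/- Let F be a field with char(F) = 2 and let T : M_3(F) → M_3(F) be a bijective linear map. Suppose that either S = C_3 and F has exactly 2 elements, or S = D_3. Then T(S) ⊆ S if and only if there exist invertible matrices P, Q ∈ M_3(F) with det(PQ) = 1 such that either T(X) = P·X·Q for all X ∈ M_3(F), or T(X) = P·Xᵗ·Q for all X ∈ M_3(F). -/

import Mathlib

open Matrix

/-- The set of matrices that are products of three involutions. -/
def ProdInv3 (F : Type*) [Field F] (n : ℕ) : Set (Matrix (Fin n) (Fin n) F) :=
  {A | ∃ J₁ J₂ J₃ : Matrix (Fin n) (Fin n) F,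
    J₁ * J₁ = 1 ∧ J₂ * J₂ = 1 ∧ J₃ * J₃ = 1 ∧ A = J₁ * J₂ * J₃}

/-- The set of matrices that are products of four involutions. -/
def ProdInv4 (F : Type*) [Field F] (n : ℕ) : Set (Matrix (Fin n) (Fin n) F) :=
  {A | ∃ J₁ J₂ J₃ J₄ : Matrix (Fin n) (Fin n) F,
    J₁ * J₁ = 1 ∧ J₂ * J₂ = 1 ∧ J₃ * J₃ = 1 ∧ J₄ * J₄ = 1 ∧ A = J₁ * J₂ * J₃ * J₄}

/-!
In characteristic two an involution has determinant one. Conversely, by Dieudonné's theorem every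
non-scalar element of `SL₃` is a product of three transvections, which are then involutions, and a
scalar of determinant one becomes non-scalar after multiplication by a transvection. Over the field
with two elements the only such scalar is `1`. Hence `S` is the set of matrices of determinant one.

A bijective linear map `T` preserving this set preserves `det`. Over the field with two elements
this is a count. Otherwise, a singular `X` is the direction of a line on which `det` is
constantly one, so the cubic coefficient `(T X).det` of `det` along the image line vanishes, and the
invertible case follows by polarization.

The polarized determinant of a matrix `A` is a bilinear form whose radical has dimension five when
`A` has rank one and at most three when `A` has larger rank. Thus `T` preserves matrices of rank at
most one. After normalizing `T` to fix the diagonal matrix units, it sends each off-diagonal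
`single i j 1` to a multiple of itself, or each to a multiple of its transpose, and the multipliers
form a matrix of rank one, which gives the two standard forms.
-/

section Transvections

open LinearEquiv Module
open scoped Pointwise

variable {K V : Type*} [Field K] [AddCommGroup V] [Module K V]

theorem mul_self_eq_one_of_mem_transvections [CharP K 2] {t : V ≃ₗ[K] V}
    (ht : t ∈ transvections K V) : t * t = 1 := by
  obtain ⟨f, v, hfv, rfl⟩ := ht
  ext x
  simp [LinearMap.transvection.apply, hfv, add_assoc, ← add_smul, CharTwo.add_self_eq_zero]

theorem mem_transvections_of_det_eq_one [FiniteDimensional K V] {e : V ≃ₗ[K] V}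
    (he : e ∈ dilatransvections K V) (hdet : LinearMap.det (e : V →ₗ[K] V) = 1) :
    e ∈ transvections K V := by
  obtain ⟨f, v, hefv⟩ := he
  have hfv : f v = 0 := by simpa [hefv] using hdet
  exact ⟨f, v, hfv, toLinearMap_injective hefv⟩

theorem det_eq_one_of_mem_transvections_pow {n : ℕ} {e : V ≃ₗ[K] V}
    (he : e ∈ transvections K V ^ n) : LinearEquiv.det e = 1 := by
  induction n generalizing e with
  | zero => simp_all
  | succ n ih =>
    obtain ⟨s, hs, t, ⟨f, v, hfv, rfl⟩, rfl⟩ := Set.mem_mul.mp (pow_succ (transvections K V) n ▸ he)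
    simp [ih hs]

theorem mem_transvections_pow_finrank [FiniteDimensional K V] [Nontrivial V] {e : V ≃ₗ[K] V}
    (he : ¬ IsExceptional e) (hdet : LinearEquiv.det e = 1) :
    e ∈ transvections K V ^ finrank K V := by
  obtain ⟨s, hs, t, ht, rfl⟩ :=
    Set.mem_mul.mp (mem_transvections_pow_mul_dilatransvections_of_not_isExceptional he)
  rw [map_mul, det_eq_one_of_mem_transvections_pow hs, one_mul] at hdet
  have ht' : t ∈ transvections K V := mem_transvections_of_det_eq_one ht <| by
    simpa using congrArg Units.val hdet
  refine transvections_pow_mono ?_ (pow_succ (transvections K V) _ ▸ Set.mul_mem_mul hs ht')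
  have : 0 < finrank K V := finrank_pos
  have := (s * t).fixedSubmodule.finrank_quotient_le
  lia

theorem det_eq_pow_finrank_quotient_of_fixedReduce_eq_smul [FiniteDimensional K V]
    {e : V ≃ₗ[K] V} {a : K} (ha : ∀ x, e.fixedReduce x = a • x) :
    LinearMap.det (e : V →ₗ[K] V) = a ^ finrank K (V ⧸ e.fixedSubmodule) := by
  have hfix : e.fixedSubmodule ≤ e.fixedSubmodule.comap (e : V →ₗ[K] V) := fun x hx ↦ by
    simp_all
  have hrestrict : (e : V →ₗ[K] V).restrict hfix = LinearMap.id := by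
    ext x
    exact x.2
  have hmapQ : e.fixedSubmodule.mapQ _ (e : V →ₗ[K] V) hfix = a • LinearMap.id := by
    ext x
    exact ha (Submodule.Quotient.mk x)
  rw [LinearMap.det_eq_det_mul_det _ _ hfix, hrestrict, hmapQ]
  simp

theorem eq_smul_id_of_isExceptional [CharP K 2] (hV : finrank K V = 3) {e : V ≃ₗ[K] V}
    (he : IsExceptional e) (hdet : LinearMap.det (e : V →ₗ[K] V) = 1) :
    ∃ a : K, (e : V →ₗ[K] V) = a • LinearMap.id := by
  have : FiniteDimensional K V := .of_finrank_pos (by lia)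
  obtain ⟨hk, hne, a, ha⟩ := he
  have hpow := det_eq_pow_finrank_quotient_of_fixedReduce_eq_smul ha
  rw [hdet] at hpow
  have hk3 := e.fixedSubmodule.finrank_quotient_le
  obtain hk | hk : finrank K (V ⧸ e.fixedSubmodule) = 2 ∨ finrank K (V ⧸ e.fixedSubmodule) = 3 := by
    lia
  · have ha1 : a = 1 := CharTwo.sq_injective (by simp [← hk, ← hpow])
    exact absurd (LinearEquiv.ext fun x ↦ by simpa [ha1] using ha x) hne
  · have hbot : e.fixedSubmodule = ⊥ := by
      rw [← Submodule.finrank_eq_zero (R := K)]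
      have := e.fixedSubmodule.finrank_quotient_add_finrank
      lia
    refine ⟨a, LinearMap.ext fun v ↦ ?_⟩
    simpa [hbot, sub_eq_zero] using (fixedReduce_eq_smul_iff e a).mp ha v

end Transvections

theorem eq_one_of_card_eq_two {M : Type*} [MulZeroOneClass M] [Nontrivial M]
    (hM : Nat.card M = 2) {a : M} (ha : a ≠ 0) : a = 1 :=
  ((Nat.card_eq_two_iff' 0).mp hM).unique ha one_ne_zero

section ProductsOfInvolutions

open LinearEquiv Module
open scoped Pointwise

variable {F : Type*} [Field F] [CharP F 2]

theorem det_eq_one_of_mul_self_eq_one {n : Type*} [Fintype n] [DecidableEq n] {J : Matrix n n F}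
    (hJ : J * J = 1) : J.det = 1 :=
  CharTwo.sq_injective (by simpa [sq] using congrArg det hJ)

theorem det_eq_one_of_mem_prodInv3 {n : ℕ} {A : Matrix (Fin n) (Fin n) F}
    (hA : A ∈ ProdInv3 F n) : A.det = 1 := by
  obtain ⟨J₁, J₂, J₃, h₁, h₂, h₃, rfl⟩ := hA
  simp [det_eq_one_of_mul_self_eq_one, *]

theorem det_eq_one_of_mem_prodInv4 {n : ℕ} {A : Matrix (Fin n) (Fin n) F}
    (hA : A ∈ ProdInv4 F n) : A.det = 1 := by
  obtain ⟨J₁, J₂, J₃, J₄, h₁, h₂, h₃, h₄, rfl⟩ := hA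
  simp [det_eq_one_of_mul_self_eq_one, *]

theorem toMatrix'_mem_prodInv3 {n : ℕ} {e : (Fin n → F) ≃ₗ[F] (Fin n → F)}
    (he : e ∈ transvections F (Fin n → F) ^ 3) :
    LinearMap.toMatrix' (e : (Fin n → F) →ₗ[F] (Fin n → F)) ∈ ProdInv3 F n := by
  have hinvol {t : (Fin n → F) ≃ₗ[F] (Fin n → F)} (ht : t ∈ transvections F (Fin n → F)) :
      LinearMap.toMatrix' (t : (Fin n → F) →ₗ[F] (Fin n → F)) *
        LinearMap.toMatrix' (t : (Fin n → F) →ₗ[F] (Fin n → F)) = 1 := by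
    rw [← LinearMap.toMatrix'_mul, ← LinearMap.toMatrix'_one]
    exact congrArg (fun s : _ ≃ₗ[F] _ ↦ LinearMap.toMatrix' s.toLinearMap)
      (mul_self_eq_one_of_mem_transvections ht)
  simp only [pow_succ, pow_zero, one_mul, Set.mem_mul] at he
  obtain ⟨_, ⟨t₁, h₁, t₂, h₂, rfl⟩, t₃, h₃, rfl⟩ := he
  refine ⟨_, _, _, hinvol h₁, hinvol h₂, hinvol h₃, ?_⟩
  simp only [← LinearMap.toMatrix'_mul]
  rfl

theorem mem_prodInv3_or_eq_smul_one {A : Matrix (Fin 3) (Fin 3) F} (hA : A.det = 1) :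
    A ∈ ProdInv3 F 3 ∨ ∃ a : F, A = a • 1 := by
  let e := LinearEquiv.ofIsUnitDet (v := Pi.basisFun F (Fin 3)) (v' := Pi.basisFun F (Fin 3))
    (f := toLin' A) (by simp [hA])
  have hdet : LinearMap.det (e : (Fin 3 → F) →ₗ[F] (Fin 3 → F)) = 1 := by
    simp [e, hA]
  have he : LinearMap.toMatrix' (e : (Fin 3 → F) →ₗ[F] (Fin 3 → F)) = A := by simp [e]
  by_cases hexc : IsExceptional e
  · obtain ⟨a, ha⟩ := eq_smul_id_of_isExceptional (by simp) hexc hdet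
    exact .inr ⟨a, by simpa [ha] using he.symm⟩
  · have hmem := mem_transvections_pow_finrank hexc (Units.ext (by simpa using hdet))
    exact .inl (he ▸ toMatrix'_mem_prodInv3 (by simpa using hmem))

theorem prodInv3_eq_setOf_det_eq_one (hcard : Nat.card F = 2) :
    ProdInv3 F 3 = {A | A.det = 1} := by
  refine Set.ext fun A ↦ ⟨det_eq_one_of_mem_prodInv3, fun hA ↦ ?_⟩
  obtain hA' | ⟨a, rfl⟩ := mem_prodInv3_or_eq_smul_one hA
  · exact hA'
  have ha : a = 1 := eq_one_of_card_eq_two hcard (by rintro rfl; simp at hA)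
  exact ⟨1, 1, 1, by simp [ha]⟩

theorem prodInv4_eq_setOf_det_eq_one : ProdInv4 F 3 = {A | A.det = 1} := by
  refine Set.ext fun A ↦ ⟨det_eq_one_of_mem_prodInv4, fun hA ↦ ?_⟩
  obtain ⟨J₁, J₂, J₃, h₁, h₂, h₃, rfl⟩ | ⟨a, rfl⟩ := mem_prodInv3_or_eq_smul_one hA
  · exact ⟨J₁, J₂, J₃, 1, h₁, h₂, h₃, one_mul 1, (mul_one _).symm⟩
  let t : Matrix (Fin 3) (Fin 3) F := Matrix.transvection 0 1 1
  have ht : t * t = 1 := by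
    simp [t, transvection_mul_transvection_same, CharTwo.add_self_eq_zero]
  have hat : (a • (1 : Matrix (Fin 3) (Fin 3) F) * t).det = 1 := by
    rw [det_mul, hA, det_eq_one_of_mul_self_eq_one ht, one_mul]
  obtain ⟨J₁, J₂, J₃, h₁, h₂, h₃, h⟩ | ⟨b, hb⟩ := mem_prodInv3_or_eq_smul_one hat
  · exact ⟨J₁, J₂, J₃, t, h₁, h₂, h₃, ht, by rw [← h, mul_assoc, ht, mul_one]⟩
  · have ha : a = 0 := by simpa [t, Matrix.transvection] using congrFun₂ hb 0 1
    simp [ha] at hA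

end ProductsOfInvolutions

section Polarization

variable {F : Type*} [Field F]

/-- The full polarization of the `3 × 3` determinant: the symmetric trilinear form with
`detPolar X X X = 6 * X.det`. It is given by inclusion-exclusion, so that every map preserving
sums and determinants visibly preserves it, in any characteristic. -/
def detPolar (X Y Z : Matrix (Fin 3) (Fin 3) F) : F :=
  (X + Y + Z).det - (X + Y).det - (X + Z).det - (Y + Z).det + X.det + Y.det + Z.det

theorem detPolar_smul (a b c : F) (X Y Z : Matrix (Fin 3) (Fin 3) F) :
    detPolar (a • X) (b • Y) (c • Z) = a * b * c * detPolar X Y Z := by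
  simp only [detPolar, det_fin_three, Matrix.add_apply, Matrix.smul_apply, smul_eq_mul]
  ring

theorem detPolar_add_middle (X Y Y' Z : Matrix (Fin 3) (Fin 3) F) :
    detPolar X (Y + Y') Z = detPolar X Y Z + detPolar X Y' Z := by
  simp only [detPolar, det_fin_three, Matrix.add_apply]
  ring

theorem detPolar_map {T : Matrix (Fin 3) (Fin 3) F →ₗ[F] Matrix (Fin 3) (Fin 3) F}
    (hT : ∀ X, (T X).det = X.det) (X Y Z : Matrix (Fin 3) (Fin 3) F) :
    detPolar (T X) (T Y) (T Z) = detPolar X Y Z := by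
  simp only [detPolar, ← map_add, hT]

end Polarization

section DetOne

open Polynomial in
theorem det_eq_zero_of_forall_det_add_smul_eq {F n : Type*} [Field F] [Fintype n] [DecidableEq n]
    [Nonempty n] {A B : Matrix n n F} {c : F} (hF : Fintype.card n < Cardinal.mk F)
    (h : ∀ t : F, (A + t • B).det = c) : B.det = 0 := by
  let p : F[X] := det ((X : F[X]) • B.map C + A.map C) - C c
  have heval (t : F) : p.eval t = 0 := by
    have hmap : (evalRingHom t).mapMatrix ((X : F[X]) • B.map C + A.map C) = A + t • B := by
      ext i j
      simp only [RingHom.mapMatrix_apply, map_apply, Matrix.add_apply, Matrix.smul_apply,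
        smul_eq_mul, coe_evalRingHom, eval_add, eval_mul, eval_X, eval_C]
      ring
    simp only [p, eval_sub, ← coe_evalRingHom, RingHom.map_det, hmap, h]
    simp
  have hdeg : p.natDegree < Cardinal.mk F := by
    refine lt_of_le_of_lt (Nat.cast_le.mpr ?_) hF
    simpa [p] using natDegree_det_X_add_C_le B A
  have hp : p = 0 := eq_zero_of_forall_eval_zero_of_natDegree_lt_card p heval hdeg
  simpa [p, coeff_det_X_add_C_card, coeff_C, Fintype.card_ne_zero] using
    congrArg (coeff · (Fintype.card n)) hp

theorem exists_eq_mul_diagonal_mul {F n : Type*} [Field F] [Fintype n] [DecidableEq n]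
    (X : Matrix n n F) :
    ∃ (P Q : Matrix n n F) (d : n → F), P.det = 1 ∧ Q.det = 1 ∧ X = P * diagonal d * Q := by
  obtain ⟨L, L', d, hX⟩ := Pivot.exists_list_transvec_mul_diagonal_mul_list_transvec X
  exact ⟨_, _, d, TransvectionStruct.det_toMatrix_prod L, TransvectionStruct.det_toMatrix_prod L',
    hX⟩

variable {F : Type*} [Field F]

theorem exists_forall_det_add_smul_eq_one {X : Matrix (Fin 3) (Fin 3) F} (hX : X.det = 0) :
    ∃ A : Matrix (Fin 3) (Fin 3) F, ∀ t : F, (A + t • X).det = 1 := by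
  obtain ⟨P, Q, d, hP, hQ, rfl⟩ := exists_eq_mul_diagonal_mul X
  have hd : d 0 * d 1 * d 2 = 0 := by
    simpa [hP, hQ, det_diagonal, Fin.prod_univ_three] using hX
  -- The proper principal minors of a 3-cycle vanish, so `det (σ + t • diagonal d)` has no term in
  -- `t` or `t ^ 2`.
  let σ : Matrix (Fin 3) (Fin 3) F := !![0, 1, 0; 0, 0, 1; 1, 0, 0]
  refine ⟨P * σ * Q, fun t ↦ ?_⟩
  have hfactor : P * σ * Q + t • (P * diagonal d * Q) = P * (σ + t • diagonal d) * Q := by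
    simp only [mul_add, add_mul, mul_smul_comm, smul_mul_assoc]
  have hσ : (σ + t • diagonal d).det = 1 := by
    have : (σ + t • diagonal d).det = 1 + t ^ 3 * (d 0 * d 1 * d 2) := by
      simp only [σ, det_fin_three, Fin.isValue, Matrix.add_apply, of_apply, cons_val',
        cons_val_zero, cons_val_fin_one, Matrix.smul_apply, diagonal_apply_eq, smul_eq_mul,
        zero_add, cons_val_one, cons_val, ne_eq, Fin.reduceEq, not_false_eq_true,
        diagonal_apply_ne, mul_zero, add_zero, mul_one, sub_zero, zero_ne_one, one_ne_zero,
        zero_mul]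
      ring
    simp [this, hd]
  rw [hfactor, det_mul, det_mul, hP, hQ, hσ, one_mul, one_mul]

variable {T : Matrix (Fin 3) (Fin 3) F →ₗ[F] Matrix (Fin 3) (Fin 3) F}

theorem det_map_eq_zero (hF : 3 < Cardinal.mk F)
    (hT : ∀ A : Matrix (Fin 3) (Fin 3) F, A.det = 1 → (T A).det = 1)
    {X : Matrix (Fin 3) (Fin 3) F} (hX : X.det = 0) : (T X).det = 0 := by
  obtain ⟨A, hA⟩ := exists_forall_det_add_smul_eq_one hX
  refine det_eq_zero_of_forall_det_add_smul_eq (A := T A) (c := 1) (by simpa using hF) fun t ↦ ?_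
  rw [← map_smul, ← map_add]
  exact hT _ (hA t)

theorem det_map_eq_det_of_three_lt_card (hF : 3 < Cardinal.mk F)
    (hT : ∀ A : Matrix (Fin 3) (Fin 3) F, A.det = 1 → (T A).det = 1)
    (X : Matrix (Fin 3) (Fin 3) F) : (T X).det = X.det := by
  obtain ⟨P, Q, d, hP, hQ, rfl⟩ := exists_eq_mul_diagonal_mul X
  let R : (Fin 3 → F) →ₗ[F] Matrix (Fin 3) (Fin 3) F :=
    T ∘ₗ LinearMap.mulLeftRight F (P, Q) ∘ₗ diagonalLinearMap (Fin 3) F F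
  have hsing {c : Fin 3 → F} (hc : c 0 * c 1 * c 2 = 0) : (R c).det = 0 :=
    det_map_eq_zero hF hT <| by
      simpa [hP, hQ, det_diagonal, Fin.prod_univ_three] using hc
  have hpolar (c : Fin 3 → F) : (R c).det = c 0 * c 1 * c 2 *
      detPolar (R (Pi.single 0 1)) (R (Pi.single 1 1)) (R (Pi.single 2 1)) := by
    have hc : c = c 0 • Pi.single 0 1 + c 1 • Pi.single 1 1 + c 2 • Pi.single 2 1 := by
      ext i
      fin_cases i <;> simp
    rw [← detPolar_smul]
    simp only [← map_smul, detPolar, ← map_add, ← hc]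
    simp [hsing, -map_add, -map_smul]
  have hone : (R 1).det = 1 := hT _ (by simp [hP, hQ])
  have hpolar_one : detPolar (R (Pi.single 0 1)) (R (Pi.single 1 1)) (R (Pi.single 2 1)) = 1 := by
    simpa [hone] using (hpolar 1).symm
  calc (R d).det = d 0 * d 1 * d 2 := by rw [hpolar, hpolar_one, mul_one]
    _ = (P * diagonal d * Q).det := by simp [hP, hQ, det_diagonal, Fin.prod_univ_three]

theorem det_map_eq_det_of_card_eq_two (hF : Nat.card F = 2) (hT_inj : Function.Injective T)
    (hT : ∀ A : Matrix (Fin 3) (Fin 3) F, A.det = 1 → (T A).det = 1)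
    (X : Matrix (Fin 3) (Fin 3) F) : (T X).det = X.det := by
  have : Finite F := Nat.finite_of_card_ne_zero (by simp [hF])
  have hiff (A : Matrix (Fin 3) (Fin 3) F) : (T A).det = 1 ↔ A.det = 1 := by
    refine ⟨fun hA ↦ ?_, hT A⟩
    have hbij : Set.BijOn T {A | A.det = 1} {A | A.det = 1} :=
      ((Set.toFinite _).injOn_iff_bijOn_of_mapsTo hT).mp hT_inj.injOn
    obtain ⟨B, hB, hBA⟩ := hbij.surjOn hA
    exact hT_inj hBA ▸ hB
  by_cases hX : X.det = 0
  · rw [hX]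
    by_contra hTX
    exact one_ne_zero (((hiff X).mp (eq_one_of_card_eq_two hF hTX)).symm.trans hX)
  · have hX1 := eq_one_of_card_eq_two hF hX
    rw [hX1, hT X hX1]

theorem natCard_eq_two_or_three_lt_mk [CharP F 2] : Nat.card F = 2 ∨ 3 < Cardinal.mk F := by
  obtain _ | _ := finite_or_infinite F
  · have := Fintype.ofFinite F
    obtain ⟨k, -, hk⟩ := FiniteField.card F 2
    rw [Nat.card_eq_fintype_card, Cardinal.mk_fintype, hk]
    obtain hk1 | hk2 : (k : ℕ) = 1 ∨ 2 ≤ (k : ℕ) := by have := k.pos; lia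
    · simp [hk1]
    · exact .inr (mod_cast (by norm_num : 3 < 2 ^ 2).trans_le (Nat.pow_le_pow_right two_pos hk2))
  · exact .inr (Cardinal.natCast_lt_aleph0.trans_le (Cardinal.aleph0_le_mk F))

theorem det_map_eq_det [CharP F 2] (hT_inj : Function.Injective T)
    (hT : ∀ A : Matrix (Fin 3) (Fin 3) F, A.det = 1 → (T A).det = 1)
    (X : Matrix (Fin 3) (Fin 3) F) : (T X).det = X.det := by
  obtain hF | hF := natCard_eq_two_or_three_lt_mk (F := F)
  · exact det_map_eq_det_of_card_eq_two hF hT_inj hT X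
  · exact det_map_eq_det_of_three_lt_card hF hT X

end DetOne

section DetRadical

variable {F : Type*} [Field F]

/-- The radical of the bilinear form `detPolar A`, that is, of the second derivative at `A` of the
`3 × 3` determinant. Its dimension detects matrices of rank at most one. -/
def detRadical (A : Matrix (Fin 3) (Fin 3) F) : Submodule F (Matrix (Fin 3) (Fin 3) F) where
  carrier := {Y | ∀ Z, detPolar A Y Z = 0}
  zero_mem' Z := by simpa using detPolar_smul 1 0 1 A 0 Z
  add_mem' hY hY' Z := by rw [detPolar_add_middle, hY, hY', add_zero]
  smul_mem' c Y hY Z := by simpa [hY Z] using detPolar_smul 1 c 1 A Y Z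

theorem finrank_detRadical_map {T : Matrix (Fin 3) (Fin 3) F →ₗ[F] Matrix (Fin 3) (Fin 3) F}
    (hT : Function.Bijective T) (hdet : ∀ X, (T X).det = X.det) (A : Matrix (Fin 3) (Fin 3) F) :
    Module.finrank F (detRadical (T A)) = Module.finrank F (detRadical A) := by
  have hcomap : (detRadical (T A)).comap T = detRadical A := by
    ext Y
    refine ⟨fun hY Z ↦ ?_, fun hY Z ↦ ?_⟩
    · exact detPolar_map hdet A Y Z ▸ hY (T Z)
    · obtain ⟨Z, rfl⟩ := hT.surjective Z
      exact (detPolar_map hdet A Y Z).trans (hY Z)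
  have hmap : (detRadical A).map (LinearEquiv.ofBijective T hT : _ →ₗ[F] _) = detRadical (T A) := by
    rw [← hcomap]
    exact Submodule.map_comap_eq_of_surjective hT.surjective _
  rw [← hmap, LinearEquiv.finrank_map_eq]

theorem finrank_detRadical_mul {P Q : Matrix (Fin 3) (Fin 3) F} (hP : P.det = 1) (hQ : Q.det = 1)
    (A : Matrix (Fin 3) (Fin 3) F) :
    Module.finrank F (detRadical (P * A * Q)) = Module.finrank F (detRadical A) := by
  have hbij : Function.Bijective (LinearMap.mulLeftRight F (P, Q)) := by
    have hP' : IsUnit P := (isUnit_iff_isUnit_det P).mpr (by simp [hP])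
    have hQ' : IsUnit Q := (isUnit_iff_isUnit_det Q).mpr (by simp [hQ])
    exact (IsUnit.isUnit_iff_mulRight_bijective.mp hQ').comp
      (IsUnit.isUnit_iff_mulLeft_bijective.mp hP')
  exact finrank_detRadical_map hbij (by simp [hP, hQ]) A

theorem detPolar_diagonal (d : Fin 3 → F) (Y Z : Matrix (Fin 3) (Fin 3) F) :
    detPolar (diagonal d) Y Z =
      (d 0 * Y 1 1 + d 1 * Y 0 0) * Z 2 2 + (d 0 * Y 2 2 + d 2 * Y 0 0) * Z 1 1 +
        (d 1 * Y 2 2 + d 2 * Y 1 1) * Z 0 0 - d 0 * (Y 1 2 * Z 2 1 + Y 2 1 * Z 1 2) -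
        d 1 * (Y 0 2 * Z 2 0 + Y 2 0 * Z 0 2) - d 2 * (Y 0 1 * Z 1 0 + Y 1 0 * Z 0 1) := by
  simp only [detPolar, det_fin_three, Fin.isValue, Matrix.add_apply, diagonal_apply_eq, ne_eq,
    Fin.reduceEq, not_false_eq_true, diagonal_apply_ne, zero_add, zero_ne_one, one_ne_zero,
    mul_zero, sub_zero, zero_mul, add_zero]
  ring

theorem mem_detRadical_diagonal_iff {d : Fin 3 → F} {Y : Matrix (Fin 3) (Fin 3) F} :
    Y ∈ detRadical (diagonal d) ↔ ∀ i j k, i ≠ j → i ≠ k → j ≠ k →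
      d i * Y j j + d j * Y i i = 0 ∧ d k * Y i j = 0 := by
  refine ⟨fun hY i j k hij hik hjk ↦ ?_, fun hY Z ↦ ?_⟩
  · have hdiag := hY (single k k 1)
    have hoff := hY (single j i 1)
    clear hY
    rw [detPolar_diagonal] at hdiag hoff
    fin_cases i <;> fin_cases j <;> fin_cases k <;>
      first
        | contradiction
        | constructor <;> simp at hdiag hoff ⊢ <;> grind
  · rw [detPolar_diagonal]
    linear_combination Z 2 2 * (hY 0 1 2 (by decide) (by decide) (by decide)).1 +
      Z 1 1 * (hY 0 2 1 (by decide) (by decide) (by decide)).1 +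
      Z 0 0 * (hY 1 2 0 (by decide) (by decide) (by decide)).1 -
      Z 2 1 * (hY 1 2 0 (by decide) (by decide) (by decide)).2 -
      Z 1 2 * (hY 2 1 0 (by decide) (by decide) (by decide)).2 -
      Z 2 0 * (hY 0 2 1 (by decide) (by decide) (by decide)).2 -
      Z 0 2 * (hY 2 0 1 (by decide) (by decide) (by decide)).2 -
      Z 1 0 * (hY 0 1 2 (by decide) (by decide) (by decide)).2 -
      Z 0 1 * (hY 1 0 2 (by decide) (by decide) (by decide)).2

theorem exists_third_index {i j : Fin 3} (hij : i ≠ j) :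
    ∃ k, i ≠ k ∧ j ≠ k ∧ ∀ l, l = i ∨ l = j ∨ l = k := by
  decide +revert

theorem finrank_detRadical_diagonal_le_three {d : Fin 3 → F} {i j : Fin 3} (hij : i ≠ j)
    (hi : d i ≠ 0) (hj : d j ≠ 0) : Module.finrank F (detRadical (diagonal d)) ≤ 3 := by
  let entries : Matrix (Fin 3) (Fin 3) F →ₗ[F] Fin 3 → F :=
    LinearMap.pi ![entryLinearMap F F i i, entryLinearMap F F i j, entryLinearMap F F j i]
  suffices hinj : Function.Injective (entries ∘ₗ (detRadical (diagonal d)).subtype) by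
    simpa using LinearMap.finrank_le_finrank_of_injective hinj
  rw [← LinearMap.ker_eq_bot, LinearMap.ker_eq_bot']
  rintro ⟨Y, hY⟩ hzero
  have hii : Y i i = 0 := congrFun hzero 0
  have hij' : Y i j = 0 := congrFun hzero 1
  have hji : Y j i = 0 := congrFun hzero 2
  obtain ⟨k, hik, hjk, hcover⟩ := exists_third_index hij
  rw [mem_detRadical_diagonal_iff] at hY
  have h₁ := hY i j k hij hik hjk
  have h₂ := hY j i k hij.symm hjk hik
  have h₃ := hY i k j hik hij hjk.symm
  have h₄ := hY k i j hik.symm hjk.symm hij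
  have h₅ := hY j k i hjk hij.symm hik.symm
  have h₆ := hY k j i hjk.symm hik.symm hij.symm
  ext a b
  obtain rfl | rfl | rfl := hcover a <;> obtain rfl | rfl | rfl := hcover b <;> simp_all

theorem three_lt_finrank_detRadical_diagonal {d : Fin 3 → F} {i : Fin 3}
    (hd : ∀ j, j ≠ i → d j = 0) : 3 < Module.finrank F (detRadical (diagonal d)) := by
  let minor : Matrix (Fin 3) (Fin 3) F →ₗ[F] Matrix (Fin 2) (Fin 2) F :=
    { toFun := fun Y ↦ Y.submatrix i.succAbove i.succAbove
      map_add' := fun _ _ ↦ rfl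
      map_smul' := fun _ _ ↦ rfl }
  have hle : LinearMap.ker minor ≤ detRadical (diagonal d) := by
    intro Y hY
    have hY_apply {j k : Fin 3} (hj : j ≠ i) (hk : k ≠ i) : Y j k = 0 := by
      obtain ⟨j, rfl⟩ := Fin.exists_succAbove_eq hj
      obtain ⟨k, rfl⟩ := Fin.exists_succAbove_eq hk
      exact congrFun₂ hY j k
    rw [mem_detRadical_diagonal_iff]
    intro j k l hjk hjl hkl
    by_cases hj : j = i <;> by_cases hk : k = i <;> by_cases hl : l = i <;> simp_all
  have hrange : Module.finrank F (LinearMap.range minor) ≤ 4 := by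
    simpa [Module.finrank_matrix] using (LinearMap.range minor).finrank_le
  have hrank_nullity :
      Module.finrank F (LinearMap.range minor) + Module.finrank F (LinearMap.ker minor) = 9 := by
    simpa [Module.finrank_matrix] using minor.finrank_range_add_finrank_ker
  have := Submodule.finrank_mono hle
  lia

theorem rank_le_one_iff_three_lt_finrank_detRadical {A : Matrix (Fin 3) (Fin 3) F} :
    A.rank ≤ 1 ↔ 3 < Module.finrank F (detRadical A) := by
  classical
  obtain ⟨P, Q, d, hP, hQ, rfl⟩ := exists_eq_mul_diagonal_mul A
  rw [finrank_detRadical_mul hP hQ, rank_mul_eq_left_of_isUnit_det _ _ (by simp [hQ]),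
    rank_mul_eq_right_of_isUnit_det _ _ (by simp [hP]), rank_diagonal,
    Fintype.card_le_one_iff_subsingleton]
  refine ⟨fun _ ↦ ?_, fun h ↦ ⟨fun i j ↦ ?_⟩⟩
  · obtain ⟨i, hi⟩ : ∃ i, ∀ j, j ≠ i → d j = 0 := by
      by_contra! hne
      obtain ⟨j, -, hj⟩ := hne 0
      obtain ⟨k, hkj, hk⟩ := hne j
      exact hkj (congrArg Subtype.val (Subsingleton.elim (⟨k, hk⟩ : {i // d i ≠ 0}) ⟨j, hj⟩))
    exact three_lt_finrank_detRadical_diagonal hi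
  · by_contra hij
    exact h.not_ge (finrank_detRadical_diagonal_le_three (Subtype.coe_ne_coe.mpr hij) i.2 j.2)

theorem rank_map_le_one {T : Matrix (Fin 3) (Fin 3) F →ₗ[F] Matrix (Fin 3) (Fin 3) F}
    (hT : Function.Bijective T) (hdet : ∀ X, (T X).det = X.det) {A : Matrix (Fin 3) (Fin 3) F}
    (hA : A.rank ≤ 1) : (T A).rank ≤ 1 := by
  rw [rank_le_one_iff_three_lt_finrank_detRadical] at hA ⊢
  rwa [finrank_detRadical_map hT hdet]

end DetRadical

section RankOne

variable {F m n : Type*} [Field F] [Fintype n]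

theorem exists_eq_vecMulVec_of_rank_le_one {A : Matrix m n F} (hA : A.rank ≤ 1) :
    ∃ u v, A = vecMulVec u v := by
  classical
  obtain ⟨⟨u, _⟩, hu⟩ := finrank_le_one_iff.mp hA
  choose v hv using fun j ↦ hu ⟨A.mulVecLin (Pi.single j 1), LinearMap.mem_range_self _ _⟩
  refine ⟨u, v, ?_⟩
  ext i j
  have hij : v j * u i = A i j := by simpa using congrFun (congrArg Subtype.val (hv j)) i
  rw [vecMulVec_apply, mul_comm, hij]

theorem mul_apply_comm_of_rank_le_one {A : Matrix m n F} (hA : A.rank ≤ 1) (i k : m) (j l : n) :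
    A i j * A k l = A i l * A k j := by
  obtain ⟨u, v, rfl⟩ := exists_eq_vecMulVec_of_rank_le_one hA
  simp only [vecMulVec_apply]
  ring

theorem apply_eq_zero_of_rank_add_single_le_one [DecidableEq n] {A : Matrix n n F} {i k l : n}
    (hA : A.rank ≤ 1) (hA' : (A + single i i 1).rank ≤ 1) (hk : k ≠ i) (hl : l ≠ i) :
    A k l = 0 := by
  have h := mul_apply_comm_of_rank_le_one hA i k i l
  have h' : (A i i + 1) * A k l = A i l * A k i := by
    simpa [hk.symm, hl.symm] using mul_apply_comm_of_rank_le_one hA' i k i l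
  linear_combination h' - h

end RankOne

section RankOnePreservers

variable {F n : Type*} [Field F] [Fintype n] [DecidableEq n]

theorem rank_single_le_one (i j : n) : (single i j (1 : F)).rank ≤ 1 := by
  rw [single_eq_single_vecMulVec_single]
  exact rank_vecMulVec_le _ _

theorem rank_single_add_single_row_le_one (i j l : n) :
    (single i j (1 : F) + single i l 1).rank ≤ 1 := by
  simp only [single_eq_single_vecMulVec_single, ← vecMulVec_add]
  exact rank_vecMulVec_le _ _

theorem rank_single_add_single_col_le_one (i k j : n) :
    (single i j (1 : F) + single k j 1).rank ≤ 1 := by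
  simp only [single_eq_single_vecMulVec_single, ← add_vecMulVec]
  exact rank_vecMulVec_le _ _

theorem exists_map_single_diag_eq_mul {T : Matrix n n F →ₗ[F] Matrix n n F}
    (hrank : ∀ A, A.rank ≤ 1 → (T A).rank ≤ 1) (hone : IsUnit (T 1)) :
    ∃ U V : Matrix n n F, IsUnit U ∧ IsUnit V ∧
      ∀ i, T (single i i 1) = U * single i i 1 * V := by
  choose u v huv using fun i ↦
    exists_eq_vecMulVec_of_rank_le_one (hrank _ (rank_single_le_one i i))
  let U : Matrix n n F := .of fun k i ↦ u i k
  let V : Matrix n n F := .of v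
  have hdiag (i : n) : T (single i i 1) = U * single i i 1 * V := by
    rw [huv, single_eq_single_vecMulVec_single, mul_vecMulVec, vecMulVec_mul]
    simp only [mulVec_single_one, single_one_vecMul]
    rfl
  have hUV : U * V = T 1 := by
    rw [← sum_single_one, map_sum]
    simp only [hdiag, ← Finset.sum_mul, ← Finset.mul_sum, sum_single_one, mul_one]
  obtain ⟨hU, hV⟩ := IsUnit.mul_iff.mp (hUV ▸ hone)
  exact ⟨U, V, hU, hV, hdiag⟩

variable {S : Matrix n n F →ₗ[F] Matrix n n F}

section FixesDiagonal

variable (hrank : ∀ A, A.rank ≤ 1 → (S A).rank ≤ 1)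
  (hdiag : ∀ i, S (single i i 1) = single i i 1)

include hrank hdiag

theorem map_single_apply_eq_zero {i j k l : n} (h : (k ≠ i ∧ l ≠ i) ∨ (k ≠ j ∧ l ≠ j)) :
    S (single i j 1) k l = 0 := by
  have hS := hrank _ (rank_single_le_one i j)
  obtain ⟨hk, hl⟩ | ⟨hk, hl⟩ := h
  · refine apply_eq_zero_of_rank_add_single_le_one hS ?_ hk hl
    rw [← hdiag i, ← map_add]
    exact hrank _ (rank_single_add_single_row_le_one i j i)
  · refine apply_eq_zero_of_rank_add_single_le_one hS ?_ hk hl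
    rw [← hdiag j, ← map_add]
    exact hrank _ (rank_single_add_single_col_le_one i j j)

theorem map_single_eq_add {i j : n} (hij : i ≠ j) : S (single i j 1) =
    single i j (S (single i j 1) i j) + single j i (S (single i j 1) j i) := by
  ext k l
  by_cases hkl : (i = k ∧ j = l) ∨ (j = k ∧ i = l)
  · obtain ⟨rfl, rfl⟩ | ⟨rfl, rfl⟩ := hkl <;> simp [hij, hij.symm]
  · rw [map_single_apply_eq_zero hrank hdiag (by grind)]
    simp_all

theorem map_single_apply_mul_apply_swap_eq_zero {i j : n} (hij : i ≠ j) :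
    S (single i j 1) i j * S (single i j 1) j i = 0 := by
  rw [mul_apply_comm_of_rank_le_one (hrank _ (rank_single_le_one i j)),
    map_single_apply_eq_zero hrank hdiag (.inr ⟨hij, hij⟩), zero_mul]

theorem map_single_row_mul_eq_zero {i j l : n} (hij : i ≠ j) (hil : i ≠ l) :
    S (single i j 1) j i * S (single i l 1) i l = 0 := by
  obtain rfl | hjl := eq_or_ne j l
  · rw [mul_comm, map_single_apply_mul_apply_swap_eq_zero hrank hdiag hij]
  have h := mul_apply_comm_of_rank_le_one
    (hrank _ (rank_single_add_single_row_le_one i j l)) j i i l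
  simpa only [map_add, Matrix.add_apply,
    map_single_apply_eq_zero hrank hdiag (.inr ⟨hjl, hil⟩),
    map_single_apply_eq_zero hrank hdiag (.inr ⟨hij, hjl.symm⟩),
    map_single_apply_eq_zero hrank hdiag (.inl ⟨hij.symm, hil.symm⟩),
    add_zero, zero_add, zero_mul] using h

theorem map_single_col_mul_eq_zero {i j k : n} (hij : i ≠ j) (hkj : k ≠ j) :
    S (single i j 1) j i * S (single k j 1) k j = 0 := by
  obtain rfl | hik := eq_or_ne i k
  · rw [mul_comm, map_single_apply_mul_apply_swap_eq_zero hrank hdiag hij]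
  have h := mul_apply_comm_of_rank_le_one
    (hrank _ (rank_single_add_single_col_le_one i k j)) j k i j
  simpa only [map_add, Matrix.add_apply,
    map_single_apply_eq_zero hrank hdiag (.inl ⟨hkj.symm, hik⟩),
    map_single_apply_eq_zero hrank hdiag (.inl ⟨hik.symm, hij.symm⟩),
    map_single_apply_eq_zero hrank hdiag (.inl ⟨hij.symm, hij.symm⟩),
    map_single_apply_eq_zero hrank hdiag (.inl ⟨hkj.symm, hkj.symm⟩),
    add_zero, zero_add, zero_mul] using h

theorem map_single_swap_mul_eq_zero (hinj : Function.Injective S) {i j : n} (hij : i ≠ j) :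
    S (single i j 1) j i * S (single j i 1) j i = 0 := by
  by_contra hne
  obtain ⟨hb, ha⟩ := mul_ne_zero_iff.mp hne
  have ha' : S (single i j 1) i j = 0 :=
    (mul_eq_zero.mp (map_single_apply_mul_apply_swap_eq_zero hrank hdiag hij)).resolve_right hb
  have hb' : S (single j i 1) i j = 0 :=
    (mul_eq_zero.mp (map_single_apply_mul_apply_swap_eq_zero hrank hdiag hij.symm)).resolve_left ha
  have hS : S (S (single j i 1) j i • single i j 1) = S (S (single i j 1) j i • single j i 1) := by
    rw [map_smul, map_smul, map_single_eq_add hrank hdiag hij,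
      map_single_eq_add hrank hdiag hij.symm, ha', hb']
    simp [mul_comm]
  have := congrFun₂ (hinj hS) i j
  simp [hij, hij.symm, ha] at this

theorem map_single_apply_swap_eq_zero_or (hinj : Function.Injective S) :
    (∀ i j, i ≠ j → S (single i j 1) j i = 0) ∨ ∀ i j, i ≠ j → S (single i j 1) i j = 0 := by
  by_contra! h
  obtain ⟨⟨i, j, hij, hb⟩, k, l, hkl, ha⟩ := h
  have ha_row {l : n} (hil : i ≠ l) : S (single i l 1) i l = 0 :=
    (mul_eq_zero.mp (map_single_row_mul_eq_zero hrank hdiag hij hil)).resolve_left hb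
  have hb_row {l : n} (hil : i ≠ l) : S (single i l 1) l i ≠ 0 := fun hb' ↦ by
    have hS : S (single i l 1) = S 0 := by
      rw [map_single_eq_add hrank hdiag hil, ha_row hil, hb']
      simp
    simpa using congrFun₂ (hinj hS) i l
  obtain rfl | hil := eq_or_ne i l
  · exact (mul_ne_zero (hb_row hkl.symm) ha) (map_single_swap_mul_eq_zero hrank hdiag hinj hkl.symm)
  · exact (mul_ne_zero (hb_row hil) ha) (map_single_col_mul_eq_zero hrank hdiag hil hkl)

theorem exists_map_eq_mul_mul (hswap : ∀ i j, i ≠ j → S (single i j 1) j i = 0) :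
    ∃ P Q : Matrix n n F, IsUnit P ∧ IsUnit Q ∧ ∀ X, S X = P * X * Q := by
  let a : Matrix n n F := of fun i j ↦ S (single i j 1) i j
  have hsingle (i j : n) (x : F) : S (single i j x) = single i j (a i j * x) := by
    have hx : single i j x = x • single i j (1 : F) := by simp
    rw [hx, map_smul]
    obtain rfl | hij := eq_or_ne i j
    · simp [a, hdiag]
    · rw [map_single_eq_add hrank hdiag hij, hswap i j hij]
      simp [a, mul_comm]
  obtain ⟨u, v, huv⟩ : ∃ u v, a = vecMulVec u v := by
    refine exists_eq_vecMulVec_of_rank_le_one ?_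
    have : S (vecMulVec 1 1) = a := by
      rw [matrix_eq_sum_single (vecMulVec 1 1), matrix_eq_sum_single a]
      simp [hsingle, vecMulVec_apply]
    exact this ▸ hrank _ (rank_vecMulVec_le _ _)
  have hunit (i : n) : u i * v i = 1 := by
    rw [← vecMulVec_apply, ← huv]
    simp [a, hdiag]
  have hu (i : n) : u i ≠ 0 := left_ne_zero_of_mul_eq_one (hunit i)
  have hv (i : n) : v i ≠ 0 := right_ne_zero_of_mul_eq_one (hunit i)
  suffices hS : S = LinearMap.mulLeftRight F (diagonal u, diagonal v) from
    ⟨diagonal u, diagonal v, by simp [isUnit_iff_isUnit_det, Finset.prod_ne_zero_iff, hu],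
      by simp [isUnit_iff_isUnit_det, Finset.prod_ne_zero_iff, hv], by simp [hS]⟩
  refine ext_linearMap F fun i j ↦ LinearMap.ext fun x ↦ ?_
  ext k l
  simp only [LinearMap.comp_apply, singleLinearMap_apply, LinearMap.mulLeftRight_apply, hsingle,
    huv, vecMulVec_apply, diagonal_mul, mul_diagonal, single_apply]
  split_ifs with h
  · rw [h.1, h.2, mul_right_comm]
  · simp

end FixesDiagonal

theorem exists_eq_mul_mul_or_eq_mul_transpose_mul {T : Matrix n n F →ₗ[F] Matrix n n F}
    (hinj : Function.Injective T) (hrank : ∀ A, A.rank ≤ 1 → (T A).rank ≤ 1)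
    (hone : IsUnit (T 1)) :
    ∃ P Q : Matrix n n F, IsUnit P ∧ IsUnit Q ∧
      ((∀ X, T X = P * X * Q) ∨ ∀ X, T X = P * Xᵀ * Q) := by
  obtain ⟨U, V, hU, hV, hUV⟩ := exists_map_single_diag_eq_mul hrank hone
  lift U to (Matrix n n F)ˣ using hU
  lift V to (Matrix n n F)ˣ using hV
  let S : Matrix n n F →ₗ[F] Matrix n n F := LinearMap.mulLeftRight F (↑U⁻¹, ↑V⁻¹) ∘ₗ T
  have hTS (X : Matrix n n F) : T X = U * S X * V := by
    simp [S, mul_assoc]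
  have hSinj : Function.Injective S := fun X Y h ↦ hinj (by rw [hTS, hTS, h])
  have hSrank (A : Matrix n n F) (hA : A.rank ≤ 1) : (S A).rank ≤ 1 :=
    (rank_mul_le_left _ _).trans ((rank_mul_le_right _ _).trans (hrank A hA))
  have hSdiag (i : n) : S (single i i 1) = single i i 1 := by
    simp [S, hUV, mul_assoc]
  obtain h | h := map_single_apply_swap_eq_zero_or hSrank hSdiag hSinj
  · obtain ⟨P, Q, hP, hQ, hPQ⟩ := exists_map_eq_mul_mul hSrank hSdiag h
    exact ⟨U * P, Q * V, U.isUnit.mul hP, hQ.mul V.isUnit,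
      .inl fun X ↦ by simp only [hTS, hPQ, mul_assoc]⟩
  · let S' : Matrix n n F →ₗ[F] Matrix n n F := S ∘ₗ (transposeLinearEquiv n n F F).toLinearMap
    have hS' (X : Matrix n n F) : S' X = S Xᵀ := rfl
    have hSrank' (A : Matrix n n F) (hA : A.rank ≤ 1) : (S' A).rank ≤ 1 :=
      hSrank Aᵀ (by rwa [rank_transpose])
    have hSdiag' (i : n) : S' (single i i 1) = single i i 1 := by
      rw [hS', transpose_single, hSdiag]
    obtain ⟨P, Q, hP, hQ, hPQ⟩ := exists_map_eq_mul_mul hSrank' hSdiag' fun i j hij ↦ by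
      rw [hS', transpose_single, h j i hij.symm]
    have hSPQ (X : Matrix n n F) : S X = P * Xᵀ * Q := by
      rw [← hPQ, hS', transpose_transpose]
    exact ⟨U * P, Q * V, U.isUnit.mul hP, hQ.mul V.isUnit,
      .inr fun X ↦ by simp only [hTS, hSPQ, mul_assoc]⟩

end RankOnePreservers

theorem stmt19 (F : Type*) [Field F] (hchar : ringChar F = 2)
    (S : Set (Matrix (Fin 3) (Fin 3) F))
    (hS : (S = ProdInv3 F 3 ∧ Nat.card F = 2) ∨ S = ProdInv4 F 3)
    (T : Matrix (Fin 3) (Fin 3) F →ₗ[F] Matrix (Fin 3) (Fin 3) F)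
    (hT : Function.Bijective T) :
    (∀ A ∈ S, T A ∈ S) ↔
      ∃ P Q : Matrix (Fin 3) (Fin 3) F, IsUnit P ∧ IsUnit Q ∧ (P * Q).det = 1 ∧
        ((∀ X, T X = P * X * Q) ∨ (∀ X, T X = P * Xᵀ * Q)) := by
  have : CharP F 2 := ringChar.of_eq hchar
  obtain rfl : S = {A | A.det = 1} := by
    obtain ⟨rfl, hF⟩ | rfl := hS
    · exact prodInv3_eq_setOf_det_eq_one hF
    · exact prodInv4_eq_setOf_det_eq_one
  constructor
  · intro hdet_one
    have hdet : ∀ X, (T X).det = X.det := det_map_eq_det hT.injective hdet_one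
    have hone : (T 1).det = 1 := by rw [hdet, det_one]
    obtain ⟨P, Q, hP, hQ, hPQ⟩ := exists_eq_mul_mul_or_eq_mul_transpose_mul hT.injective
      (fun A ↦ rank_map_le_one hT hdet) ((isUnit_iff_isUnit_det _).mpr (by simp [hone]))
    refine ⟨P, Q, hP, hQ, ?_, hPQ⟩
    obtain h | h := hPQ <;> simpa [h] using hone
  · rintro ⟨P, Q, -, -, hPQ, h | h⟩ A (hA : A.det = 1) <;>
      simpa [h, hA] using hPQ
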